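/- Let k be a positive integer and let C be a self-dual Z4-code of length 24k+8 whose minimum Lee weight d_L(C) equals 8k+8 or 8k+6. Then the residue code C^(1) is a binary extremal doubly even self-dual code of length 24k+8, i.e., C^(1) equals its own dual, every codeword of C^(1) has Hamming weight divisible by 4, and the minimum Hamming weight of C^(1) is 4k+4. -/

import Mathlib

open Finset

namespace Z4Note

variable {ι : Type*} [Fintype ι]

/-- Hamming weight of a binary vector. -/
def hWt (x : ι → ZMod 2) : ℕ := (Finset.univ.filter fun i => x i ≠ 0).card

/-- Lee value of an element of `ZMod 4`:  0 ↦ 0, 1 ↦ 1, 2 ↦ 2, 3 ↦ 1. -/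
def leeVal (a : ZMod 4) : ℕ := min a.val (4 - a.val)

/-- Lee weight `n₁(x) + 2 n₂(x) + n₃(x)`. -/
def leeWt (x : ι → ZMod 4) : ℕ := ∑ i, leeVal (x i)

/-- Euclidean weight `n₁(x) + 4 n₂(x) + n₃(x)`. -/
def eucWt (x : ι → ZMod 4) : ℕ := ∑ i, (leeVal (x i)) ^ 2

/-- Number of coordinates of `x` equal to `a`. -/
def nCount (a : ZMod 4) (x : ι → ZMod 4) : ℕ := (Finset.univ.filter fun i => x i = a).card

/-- Dual of a `ZMod 4`-code (as a set), w.r.t. the standard inner product. -/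
def dualZ4 (C : Set (ι → ZMod 4)) : Set (ι → ZMod 4) :=
  {x | ∀ y ∈ C, ∑ i, x i * y i = 0}

/-- Dual of a binary code (as a set), w.r.t. the standard inner product. -/
def dual2 (C : Set (ι → ZMod 2)) : Set (ι → ZMod 2) :=
  {x | ∀ y ∈ C, ∑ i, x i * y i = 0}

/-- A `ZMod 4`-code is self-dual if it equals its dual. -/
def SelfDualZ4 (C : Submodule (ZMod 4) (ι → ZMod 4)) : Prop :=
  (C : Set (ι → ZMod 4)) = dualZ4 (C : Set (ι → ZMod 4))

/-- A binary code is self-dual if it equals its dual. -/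
def SelfDual2 (D : Submodule (ZMod 2) (ι → ZMod 2)) : Prop :=
  (D : Set (ι → ZMod 2)) = dual2 (D : Set (ι → ZMod 2))

/-- Coordinatewise reduction modulo 2. -/
def res2 (x : ι → ZMod 4) : ι → ZMod 2 :=
  fun i => ZMod.castHom (by norm_num : (2:ℕ) ∣ 4) (ZMod 2) (x i)

/-- The residue code `C⁽¹⁾ = {c mod 2 : c ∈ C}`. -/
def residue (C : Set (ι → ZMod 4)) : Set (ι → ZMod 2) := res2 '' C

/-- Minimum Lee weight among nonzero codewords. -/
noncomputable def minLee (C : Set (ι → ZMod 4)) : ℕ := sInf {d | ∃ x ∈ C, x ≠ 0 ∧ leeWt x = d}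

/-- Minimum Euclidean weight among nonzero codewords. -/
noncomputable def minEuc (C : Set (ι → ZMod 4)) : ℕ := sInf {d | ∃ x ∈ C, x ≠ 0 ∧ eucWt x = d}

/-- Minimum Hamming weight among nonzero codewords of a binary code. -/
noncomputable def minHam (C : Set (ι → ZMod 2)) : ℕ := sInf {d | ∃ x ∈ C, x ≠ 0 ∧ hWt x = d}

/-- A binary code is doubly even if all weights are divisible by 4. -/
def DoublyEven (C : Set (ι → ZMod 2)) : Prop := ∀ x ∈ C, 4 ∣ hWt x

/-- A binary code is singly even if some codeword has weight not divisible by 4. -/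
def SinglyEven (C : Set (ι → ZMod 2)) : Prop := ∃ x ∈ C, ¬ 4 ∣ hWt x

/-- A self-dual `ZMod 4`-code is Type II if all Euclidean weights are divisible by 8. -/
def TypeII (C : Set (ι → ZMod 4)) : Prop := ∀ x ∈ C, 8 ∣ eucWt x

/-- The doubly even subcode of a binary code. -/
def evenSubcode (D : Set (ι → ZMod 2)) : Set (ι → ZMod 2) := {x ∈ D | 4 ∣ hWt x}

/-- The shadow `S = D₀^⊥ \ D` of a binary code. -/
def shadow (D : Set (ι → ZMod 2)) : Set (ι → ZMod 2) := dual2 (evenSubcode D) \ D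

/-- A binary singly even self-dual code is s-extremal if equality holds in the
Bachoc–Gaborit bound relating the minimum weight of the code and of its shadow. -/
def SExtremal (D : Submodule (ZMod 2) (ι → ZMod 2)) : Prop :=
  SelfDual2 D ∧ SinglyEven (D : Set (ι → ZMod 2)) ∧
  ((¬ (Fintype.card ι % 24 = 22 ∧
        minHam (D : Set (ι → ZMod 2)) = 4 * (Fintype.card ι / 24) + 6)) →
      minHam (shadow (D : Set (ι → ZMod 2))) + 2 * minHam (D : Set (ι → ZMod 2)) =
        Fintype.card ι / 2 + 4) ∧
  ((Fintype.card ι % 24 = 22 ∧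
        minHam (D : Set (ι → ZMod 2)) = 4 * (Fintype.card ι / 24) + 6) →
      minHam (shadow (D : Set (ι → ZMod 2))) + 2 * minHam (D : Set (ι → ZMod 2)) =
        Fintype.card ι / 2 + 8)

/-- Equivalence of `ZMod 4`-codes: coordinate permutation together with sign changes. -/
def Z4Equiv (C C' : Set (ι → ZMod 4)) : Prop :=
  ∃ σ : Equiv.Perm ι, ∃ ε : ι → ZMod 4, (∀ i, ε i = 1 ∨ ε i = -1) ∧
    C' = (fun x => fun i => ε i * x (σ i)) '' C

/-- Covering radius of a binary code. -/
noncomputable def covRad (C : Set (ι → ZMod 2)) : ℕ :=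
  sInf {R | ∀ v : ι → ZMod 2, ∃ c ∈ C, hWt (v - c) ≤ R}

/-- Entry `(i,j)` of the circulant matrix with first row `r`. -/
def circEntry {m : ℕ} (r : Fin m → ZMod 4) (i j : Fin m) : ZMod 4 := r (j - i)

/-- Entry `(i,j)` of the negacirculant matrix with first row `r`. -/
def negaEntry {m : ℕ} (r : Fin m → ZMod 4) (i j : Fin m) : ZMod 4 :=
  if i.val ≤ j.val then r (j - i) else - r (j - i)

/-- The bordered part `B` of the generator matrix of a bordered double circulant code. -/
def bdcB {m : ℕ} (α β γ : ZMod 4) (r : Fin m → ZMod 4) :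
    Fin (m+1) → Fin (m+1) → ZMod 4 :=
  Fin.cases (Fin.cases α fun _ => β) (fun i' => Fin.cases γ fun j' => circEntry r i' j')

/-- Row `i` of the generator matrix `(I | B)` of a bordered double circulant code. -/
def bdcRow {m : ℕ} (α β γ : ZMod 4) (r : Fin m → ZMod 4) (i : Fin (m+1)) :
    (Fin (m+1) ⊕ Fin (m+1)) → ZMod 4 :=
  Sum.elim (fun j => if j = i then 1 else 0) (bdcB α β γ r i)

/-- The bordered double circulant code of length `2(m+1)`. -/
def bdcCode {m : ℕ} (α β γ : ZMod 4) (r : Fin m → ZMod 4) :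
    Submodule (ZMod 4) ((Fin (m+1) ⊕ Fin (m+1)) → ZMod 4) :=
  Submodule.span (ZMod 4) (Set.range (bdcRow α β γ r))

/-- The block matrix `[[A, B], [-Bᵀ, Aᵀ]]` built from negacirculant `A`, `B`. -/
def fourNegaM {n : ℕ} (a b : Fin n → ZMod 4) :
    (Fin n ⊕ Fin n) → (Fin n ⊕ Fin n) → ZMod 4
  | Sum.inl i, Sum.inl j => negaEntry a i j
  | Sum.inl i, Sum.inr j => negaEntry b i j
  | Sum.inr i, Sum.inl j => - negaEntry b j i
  | Sum.inr i, Sum.inr j => negaEntry a j i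

/-- Row `i` of the generator matrix `(I | M)` of a four-negacirculant code. -/
def fourNegaRow {n : ℕ} (a b : Fin n → ZMod 4) (i : Fin n ⊕ Fin n) :
    ((Fin n ⊕ Fin n) ⊕ (Fin n ⊕ Fin n)) → ZMod 4 :=
  Sum.elim (fun j => if j = i then 1 else 0) (fourNegaM a b i)

/-- The four-negacirculant code of length `4n`. -/
def fourNegaCode {n : ℕ} (a b : Fin n → ZMod 4) :
    Submodule (ZMod 4) (((Fin n ⊕ Fin n) ⊕ (Fin n ⊕ Fin n)) → ZMod 4) :=
  Submodule.span (ZMod 4) (Set.range (fourNegaRow a b))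

end Z4Note

/-!
Let `n = 24 * k + 8`. For `c` in the self-dual code `C` the inner product `c ⬝ᵥ c = 0` is the
Hamming weight of `c mod 2` modulo `4`, so the residue code `D` is doubly even. If `v` is orthogonal
to `D`, then `2 * v ∈ C` has Lee weight `2 * hWt v`; hence the nonzero words of the dual of `D` have
weight at least `4 * k + 3`.

As `8 ∣ n`, a maximal doubly even code `E` containing `D` is self-dual: evaluating the Gauss sum of
`v ↦ I ^ hWt v` over its dual in two ways determines its cardinality. Since `E` lies in the dual of
`D`, its nonzero weights are `n` and multiples of `4` between `4 * k + 4` and `20 * k + 4`. These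
are at most `4 * k + 2` values, so by Delsarte every vector is within distance `4 * k + 2` of `E`; a
vector of the dual of `D` outside `E` would then give a nonzero word that is too light. Thus `D` and
its dual both equal `E`.

That the minimum weight is at most `4 * k + 4` is the Mallows–Sloane bound. By Gleason's theorem the
weight enumerator is a combination of products of two explicit generators. Lagrange inversion
yields a linear functional that kills all of these and sees only the coefficients up to degree
`k + 1` in `x ^ 4`, but is negative at `1`; so these coefficients are not those of `1`.
-/

namespace Z4Note

section BinaryVectors

variable {ι : Type*} [Fintype ι]

lemma eq_zero_or_eq_one : ∀ a : ZMod 2, a = 0 ∨ a = 1 := by decide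

lemma hWt_eq_zero {x : ι → ZMod 2} : hWt x = 0 ↔ x = 0 :=
  hammingNorm_eq_zero

lemma hWt_le_card (x : ι → ZMod 2) : hWt x ≤ Fintype.card ι :=
  hammingNorm_le_card_fintype

lemma hWt_one : hWt (1 : ι → ZMod 2) = Fintype.card ι := by
  simp [hWt]

lemma hWt_eq_sum_val (x : ι → ZMod 2) : hWt x = ∑ i, (x i).val := by
  have h : ∀ a : ZMod 2, (if a ≠ 0 then 1 else 0) = a.val := by decide
  simp only [hWt, card_filter, h]

lemma card_sub_hWt (x : ι → ZMod 2) : Fintype.card ι - hWt x = #{i | x i = 0} := by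
  have h := card_filter_add_card_filter_not (s := univ) (p := fun i => x i = 0)
  rw [card_univ] at h
  rw [← h, hWt, Nat.add_sub_cancel]

/-- The product `x * y` is the indicator vector of the common support. -/
lemma hWt_add_add_two_mul_hWt_mul (x y : ι → ZMod 2) :
    hWt (x + y) + 2 * hWt (x * y) = hWt x + hWt y := by
  have h : ∀ a b : ZMod 2, (a + b).val + 2 * (a * b).val = a.val + b.val := by decide
  simp only [hWt_eq_sum_val, mul_sum, ← sum_add_distrib, Pi.add_apply, Pi.mul_apply, h]

lemma hWt_one_add (x : ι → ZMod 2) : hWt (1 + x) = Fintype.card ι - hWt x := by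
  have h := hWt_add_add_two_mul_hWt_mul 1 x
  rw [one_mul, hWt_one] at h
  omega

lemma hWt_le_hWt_add_single_add_one [DecidableEq ι] (x : ι → ZMod 2) (i : ι) :
    hWt x ≤ hWt (x + Pi.single i 1) + 1 := by
  have h := hWt_add_add_two_mul_hWt_mul (x + Pi.single i 1) (Pi.single i 1)
  have h1 : hWt (Pi.single i 1 : ι → ZMod 2) = 1 := by
    simp [hWt, Pi.single_apply, filter_eq']
  rw [add_assoc, ZModModule.add_self, add_zero] at h
  omega

lemma dotProduct_eq_natCast_hWt_mul (x y : ι → ZMod 2) : x ⬝ᵥ y = (hWt (x * y) : ZMod 2) := by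
  simp [hWt_eq_sum_val, dotProduct]

lemma dotProduct_eq_zero_iff_even (x y : ι → ZMod 2) : x ⬝ᵥ y = 0 ↔ 2 ∣ hWt (x * y) := by
  rw [dotProduct_eq_natCast_hWt_mul, ZMod.natCast_eq_zero_iff]

end BinaryVectors

section DualCode

variable {ι : Type*} [Fintype ι]

/-- The dual `D^⊥` of a binary code, as a code: `dual2` bundled as a submodule. -/
def dualCode (D : Submodule (ZMod 2) (ι → ZMod 2)) : Submodule (ZMod 2) (ι → ZMod 2) :=
  LinearMap.BilinForm.orthogonal (dotProductBilin (ZMod 2) (ZMod 2)) D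

lemma mem_dualCode {D : Submodule (ZMod 2) (ι → ZMod 2)} {v : ι → ZMod 2} :
    v ∈ dualCode D ↔ ∀ c ∈ D, c ⬝ᵥ v = 0 :=
  Iff.rfl

lemma coe_dualCode (D : Submodule (ZMod 2) (ι → ZMod 2)) :
    (dualCode D : Set (ι → ZMod 2)) = dual2 D := by
  ext v
  simp only [SetLike.mem_coe, mem_dualCode, dotProduct_comm _ v]
  rfl

lemma selfDual2_iff_dualCode_eq {D : Submodule (ZMod 2) (ι → ZMod 2)} :
    SelfDual2 D ↔ dualCode D = D := by
  rw [SelfDual2, ← coe_dualCode, SetLike.coe_set_eq, eq_comm]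

lemma dualCode_dualCode (D : Submodule (ZMod 2) (ι → ZMod 2)) : dualCode (dualCode D) = D := by
  classical
  refine LinearMap.BilinForm.orthogonal_orthogonal (.ofSeparatingLeft fun v hv => ?_)
    (fun v w h => (dotProduct_comm w v).trans h) D
  exact dotProduct_eq_zero v hv

end DualCode

section MacWilliams

variable {ι : Type*} [Fintype ι] {R : Type*} [CommRing R]

variable (R) in
/-- The nontrivial character `a ↦ (-1) ^ a` of `ZMod 2`. -/
def signChar : AddChar (ZMod 2) R :=
  AddChar.zmodChar 2 neg_one_sq

lemma signChar_apply (a : ZMod 2) : signChar R a = (-1) ^ a.val := rfl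

lemma signChar_one : signChar R 1 = -1 := by
  simp [signChar_apply, ZMod.val_one]

lemma signChar_dotProduct (c v : ι → ZMod 2) :
    signChar R (c ⬝ᵥ v) = ∏ i, signChar R (c i * v i) :=
  map_prod (signChar R).toMonoidHom (fun i => Multiplicative.ofAdd (c i * v i)) univ

open scoped Classical in
lemma sum_signChar_mul_pow_hWt (a b : R) (c : ι → ZMod 2) :
    ∑ v : ι → ZMod 2, signChar R (c ⬝ᵥ v) * (a ^ (Fintype.card ι - hWt v) * b ^ hWt v) =
      (a + b) ^ (Fintype.card ι - hWt c) * (a - b) ^ hWt c := by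
  have weight (x : ι → ZMod 2) (s t : R) :
      s ^ (Fintype.card ι - hWt x) * t ^ hWt x = ∏ i, if x i = 0 then s else t := by
    rw [prod_ite, prod_const, prod_const, card_sub_hWt, hWt]
  have coordinate (z : ZMod 2) : ∑ y : ZMod 2, signChar R (z * y) * (if y = 0 then a else b) =
      if z = 0 then a + b else a - b := by
    rw [show (univ : Finset (ZMod 2)) = {0, 1} from rfl, sum_pair zero_ne_one]
    obtain rfl | rfl := eq_zero_or_eq_one z
    · simp
    · simp [signChar_one, sub_eq_add_neg]
  simp only [weight, ← coordinate, prod_univ_sum, Fintype.piFinset_univ, prod_mul_distrib,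
    signChar_dotProduct]

lemma signChar_eq_one_iff [CharZero R] {a : ZMod 2} : signChar R a = 1 ↔ a = 0 := by
  obtain rfl | rfl := eq_zero_or_eq_one a
  · simp
  · simp [signChar_one, neg_eq_iff_add_eq_zero, one_add_one_eq_two]

variable [IsDomain R] [CharZero R]

open scoped Classical in
lemma sum_signChar_dotProduct (D : Submodule (ZMod 2) (ι → ZMod 2)) (v : ι → ZMod 2) :
    ∑ c : D, signChar R (c ⬝ᵥ v) = if v ∈ dualCode D then (Fintype.card D : R) else 0 := by
  let ψ : AddChar D R := (signChar R).compAddMonoidHom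
    (LinearMap.flip (dotProductBilin (ZMod 2) (ZMod 2)) v ∘ₗ D.subtype).toAddMonoidHom
  have hψ : ψ = 0 ↔ v ∈ dualCode D := by
    simp [ψ, DFunLike.ext_iff, mem_dualCode, signChar_eq_one_iff]
  rw [← if_congr hψ rfl rfl]
  exact AddChar.sum_eq_ite ψ

open scoped Classical in
theorem macWilliams_identity (D : Submodule (ZMod 2) (ι → ZMod 2)) (a b : R) :
    ∑ c : D, (a + b) ^ (Fintype.card ι - hWt (c : ι → ZMod 2)) * (a - b) ^ hWt (c : ι → ZMod 2) =
      Fintype.card D * ∑ v : dualCode D,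
        a ^ (Fintype.card ι - hWt (v : ι → ZMod 2)) * b ^ hWt (v : ι → ZMod 2) := by
  simp only [← sum_signChar_mul_pow_hWt]
  rw [sum_comm]
  simp only [← sum_mul, sum_signChar_dotProduct, ite_mul, zero_mul]
  rw [← sum_filter, ← mul_sum, sum_subtype _ (p := (· ∈ dualCode D)) (by simp)]

open scoped Classical in
lemma card_mul_card_dualCode (D : Submodule (ZMod 2) (ι → ZMod 2)) :
    Fintype.card D * Fintype.card (dualCode D) = 2 ^ Fintype.card ι := by
  have h := macWilliams_identity (R := ℤ) D 1 1
  rw [sum_eq_single 0 (fun c _ hc => by simp [hWt_eq_zero, hc]) (by simp)] at h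
  have h' : (Fintype.card D * Fintype.card (dualCode D) : ℤ) = 2 ^ Fintype.card ι := by
    simpa [hWt_eq_zero.2 rfl, one_add_one_eq_two] using h.symm
  exact_mod_cast h'

end MacWilliams

section DoublyEvenCodes

variable {ι : Type*} [Fintype ι] {D : Submodule (ZMod 2) (ι → ZMod 2)}

lemma DoublyEven.le_dualCode (hD : DoublyEven (D : Set (ι → ZMod 2))) : D ≤ dualCode D := by
  intro v hv c hc
  have hcv := hD (c + v) (D.add_mem hc hv)
  have h := hWt_add_add_two_mul_hWt_mul c v
  have := hD c hc
  have := hD v hv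
  exact (dotProduct_eq_zero_iff_even c v).2 (by omega)

lemma DoublyEven.sup_span_singleton (hD : DoublyEven (D : Set (ι → ZMod 2))) {v : ι → ZMod 2}
    (hv : v ∈ dualCode D) (h4 : 4 ∣ hWt v) :
    DoublyEven ((D ⊔ Submodule.span (ZMod 2) {v} :) : Set (ι → ZMod 2)) := by
  intro x hx
  obtain ⟨c, hc, w, hw, rfl⟩ := Submodule.mem_sup.1 hx
  obtain ⟨a, rfl⟩ := Submodule.mem_span_singleton.1 hw
  obtain rfl | rfl := eq_zero_or_eq_one a
  · simpa using hD c hc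
  · have h := hWt_add_add_two_mul_hWt_mul c v
    have := hD c hc
    have := (dotProduct_eq_zero_iff_even c v).1 (hv c hc)
    rw [one_smul]
    omega

lemma even_hWt_of_one_mem (h1 : 1 ∈ D) {v : ι → ZMod 2} (hv : v ∈ dualCode D) : 2 ∣ hWt v := by
  simpa using (dotProduct_eq_zero_iff_even 1 v).1 (hv 1 h1)

lemma DoublyEven.one_mem_dualCode (hD : DoublyEven (D : Set (ι → ZMod 2))) : 1 ∈ dualCode D := by
  refine fun c hc => (dotProduct_eq_zero_iff_even c 1).2 ?_
  rw [mul_one]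
  exact Dvd.dvd.trans (by norm_num) (hD c hc)

/-- A doubly even code that is contained in no larger doubly even code. -/
def IsMaximalDoublyEven (D : Submodule (ZMod 2) (ι → ZMod 2)) : Prop :=
  Maximal (fun E : Submodule (ZMod 2) (ι → ZMod 2) ↦ DoublyEven (E : Set (ι → ZMod 2))) D

lemma IsMaximalDoublyEven.mem (hD : IsMaximalDoublyEven D) {v : ι → ZMod 2}
    (hv : v ∈ dualCode D) (h4 : 4 ∣ hWt v) : v ∈ D :=
  hD.2 (hD.1.sup_span_singleton hv h4) le_sup_left
    (Submodule.mem_sup_right (Submodule.mem_span_singleton_self v))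

lemma IsMaximalDoublyEven.one_mem (h4 : 4 ∣ Fintype.card ι) (hD : IsMaximalDoublyEven D) : 1 ∈ D :=
  hD.mem hD.1.one_mem_dualCode (hWt_one (ι := ι) ▸ h4)

open scoped Classical in
open Complex in
lemma IsMaximalDoublyEven.sum_I_pow_hWt (h4 : 4 ∣ Fintype.card ι)
    (hD : IsMaximalDoublyEven D) :
    ∑ v : dualCode D, I ^ hWt (v : ι → ZMod 2) =
      2 * Fintype.card D - Fintype.card (dualCode D) := by
  have term (v : dualCode D) :
      I ^ hWt (v : ι → ZMod 2) = 2 * (if (v : ι → ZMod 2) ∈ D then 1 else 0) - 1 := by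
    obtain ⟨t, ht⟩ := even_hWt_of_one_mem (hD.one_mem h4) v.2
    have hmem : (v : ι → ZMod 2) ∈ D ↔ Even t := by
      rw [even_iff_two_dvd]
      exact ⟨fun hv => by have := hD.1 _ hv; omega,
        fun ⟨s, hs⟩ => hD.mem v.2 ⟨s, by omega⟩⟩
    rw [ht, pow_mul, I_sq]
    split_ifs with hv
    · rw [(hmem.1 hv).neg_one_pow]; norm_num
    · rw [(Nat.not_even_iff_odd.1 (hmem.not.1 hv)).neg_one_pow]; norm_num
  have card_D : #{v : dualCode D | (v : ι → ZMod 2) ∈ D} = Fintype.card D := by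
    rw [← Fintype.card_subtype]
    exact Fintype.card_congr (Equiv.subtypeSubtypeEquivSubtype fun hv => hD.1.le_dualCode hv)
  simp [term, sum_sub_distrib, ← mul_sum, card_D, -mul_ite]

open scoped Classical in
open Complex in
/-- The Gauss sum of `v ↦ I ^ hWt v`: `(1 + I) ^ 4 = (1 - I) ^ 4 = -4`. -/
lemma DoublyEven.sum_I_pow_hWt_dualCode (hD : DoublyEven (D : Set (ι → ZMod 2))) {m : ℕ}
    (hm : Fintype.card ι = 8 * m) : ∑ v : dualCode D, I ^ hWt (v : ι → ZMod 2) = 16 ^ m := by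
  have hadd : (1 + I) ^ 4 = -4 := by linear_combination (I ^ 2 + 4 * I + 5) * I_sq
  have hsub : (1 - I) ^ 4 = -4 := by linear_combination (I ^ 2 - 4 * I + 5) * I_sq
  have term (c : D) :
      (1 + I) ^ (Fintype.card ι - hWt (c : ι → ZMod 2)) * (1 - I) ^ hWt (c : ι → ZMod 2) =
        16 ^ m := by
    obtain ⟨j, hj⟩ := hD c c.2
    have hle := hWt_le_card (c : ι → ZMod 2)
    rw [hj, show Fintype.card ι - 4 * j = 4 * (2 * m - j) by omega, pow_mul, pow_mul, hadd, hsub,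
      ← pow_add, show 2 * m - j + j = 2 * m by omega, pow_mul]
    norm_num
  have h := macWilliams_identity D 1 I
  simp only [term, one_pow, one_mul, sum_const, card_univ, nsmul_eq_mul] at h
  exact (mul_left_cancel₀ (Nat.cast_ne_zero.2 Fintype.card_ne_zero) h).symm

lemma IsMaximalDoublyEven.dualCode_eq (h8 : 8 ∣ Fintype.card ι)
    (hD : IsMaximalDoublyEven D) :
    dualCode D = D := by
  classical
  obtain ⟨m, hm⟩ := h8
  have hsum : (16 ^ m : ℤ) = 2 * Fintype.card D - Fintype.card (dualCode D) := by
    have h := hD.1.sum_I_pow_hWt_dualCode hm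
    rw [hD.sum_I_pow_hWt ⟨2 * m, by omega⟩] at h
    exact_mod_cast h.symm
  have hprod : (Fintype.card D * Fintype.card (dualCode D) : ℤ) = 16 ^ m * 16 ^ m := by
    have h := card_mul_card_dualCode D
    rw [hm, pow_mul, show 2 ^ 8 = 16 * 16 from rfl, mul_pow] at h
    exact_mod_cast h
  have hcard : (Fintype.card D : ℤ) = 16 ^ m := by
    have : ((Fintype.card D : ℤ) - 16 ^ m) * (2 * Fintype.card D + 16 ^ m) = 0 := by
      linear_combination hprod - Fintype.card D * hsum
    have hpos : (0 : ℤ) < 2 * Fintype.card D + 16 ^ m := by positivity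
    exact sub_eq_zero.1 ((mul_eq_zero.1 this).resolve_right hpos.ne')
  refine (SetLike.coe_injective (Set.eq_of_subset_of_card_le hD.1.le_dualCode ?_)).symm
  have : (Fintype.card (dualCode D) : ℤ) ≤ Fintype.card D := by linarith
  exact_mod_cast this

theorem exists_selfDual_ge_of_doublyEven (h8 : 8 ∣ Fintype.card ι)
    (hD : DoublyEven (D : Set (ι → ZMod 2))) :
    ∃ E : Submodule (ZMod 2) (ι → ZMod 2),
      D ≤ E ∧ DoublyEven (E : Set (ι → ZMod 2)) ∧ dualCode E = E := by
  obtain ⟨E, hDE, hE⟩ := (Set.toFinite {E : Submodule (ZMod 2) (ι → ZMod 2) |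
    DoublyEven (E : Set (ι → ZMod 2))}).exists_le_maximal hD
  exact ⟨E, hDE, hE.1, IsMaximalDoublyEven.dualCode_eq h8 hE⟩

end DoublyEvenCodes

section CoveringRadius

variable {ι : Type*} [Fintype ι] {D : Submodule (ZMod 2) (ι → ZMod 2)}

lemma two_mul_hWt_eq_sum_signChar [DecidableEq ι] (c : ι → ZMod 2) :
    2 * (hWt c : ℝ) = ∑ i, (1 - signChar ℝ (c ⬝ᵥ Pi.single i 1)) := by
  have h (a : ZMod 2) : 2 * (a.val : ℝ) = 1 - signChar ℝ a := by
    obtain rfl | rfl := eq_zero_or_eq_one a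
    · simp
    · norm_num [signChar_one, ZMod.val_one]
  simp only [dotProduct_single_one, ← h, ← mul_sum, hWt_eq_sum_val, Nat.cast_sum]

open scoped Classical in
/-- Since `hWt c = ∑ i, (1 - χ (c i)) / 2`, each power of `hWt c` costs one coordinate flip of
`v`, and the character sum vanishes until some flip of `v` lands in `dualCode D`. -/
lemma sum_hWt_pow_mul_signChar_eq_zero {r : ℕ} {v : ι → ZMod 2}
    (hv : ∀ d ∈ dualCode D, r < hWt (v + d)) :
    ∑ c : D, (hWt (c : ι → ZMod 2) : ℝ) ^ r * signChar ℝ (c ⬝ᵥ v) = 0 := by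
  induction r generalizing v with
  | zero =>
    have hvD : v ∉ dualCode D := fun h => by
      simpa [ZModModule.add_self, hWt_eq_zero.2] using hv v h
    simp [sum_signChar_dotProduct, hvD]
  | succ r ih =>
    have split (c : D) : 2 * ((hWt (c : ι → ZMod 2) : ℝ) ^ (r + 1) * signChar ℝ (c ⬝ᵥ v)) =
        ∑ i, ((hWt (c : ι → ZMod 2) : ℝ) ^ r * signChar ℝ (c ⬝ᵥ v) -
          (hWt (c : ι → ZMod 2) : ℝ) ^ r * signChar ℝ (c ⬝ᵥ (v + Pi.single i 1))) := by
      rw [pow_succ, mul_right_comm, mul_left_comm, two_mul_hWt_eq_sum_signChar, mul_sum]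
      simp only [dotProduct_add, AddChar.map_add_eq_mul, mul_sub, mul_one, mul_assoc]
    have flip (i : ι) (d) (hd : d ∈ dualCode D) : r < hWt (v + Pi.single i 1 + d) := by
      have h := hWt_le_hWt_add_single_add_one (v + d) i
      rw [add_right_comm] at h
      have := hv d hd
      omega
    refine (mul_eq_zero_iff_left two_ne_zero).1 ?_
    rw [mul_sum, sum_congr rfl fun c _ => split c, sum_comm]
    refine sum_eq_zero fun i _ => ?_
    rw [sum_sub_distrib, ih fun d hd => r.lt_succ_self.trans (hv d hd), ih (flip i), sub_zero]

open scoped Classical in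
open Polynomial in
lemma sum_eval_hWt_mul_signChar_eq_zero {v : ι → ZMod 2} {p : ℝ[X]}
    (hv : ∀ d ∈ dualCode D, p.natDegree < hWt (v + d)) :
    ∑ c : D, p.eval (hWt (c : ι → ZMod 2) : ℝ) * signChar ℝ (c ⬝ᵥ v) = 0 := by
  simp only [eval_eq_sum_range, sum_mul, mul_assoc]
  rw [sum_comm]
  refine sum_eq_zero fun r hr => ?_
  rw [← mul_sum, sum_hWt_pow_mul_signChar_eq_zero fun d hd =>
    (Nat.le_of_lt_succ (mem_range.1 hr)).trans_lt (hv d hd), mul_zero]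

open Polynomial in
/-- Delsarte's bound on the covering radius of the dual code, by the number of weights. -/
theorem exists_mem_dualCode_hWt_add_le_card {S : Finset ℕ} (h0 : 0 ∉ S)
    (hS : ∀ c ∈ D, c ≠ 0 → hWt c ∈ S) (v : ι → ZMod 2) :
    ∃ d ∈ dualCode D, hWt (v + d) ≤ #S := by
  classical
  by_contra! hv
  let p : ℝ[X] := ∏ w ∈ S, (X - C (w : ℝ))
  have eval_p (n : ℕ) : p.eval (n : ℝ) = ∏ w ∈ S, ((n : ℝ) - w) := by simp [p, eval_prod]
  have natDegree_p : p.natDegree = #S := natDegree_finsetProd_X_sub_C_eq_card S _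
  have hsum := sum_eval_hWt_mul_signChar_eq_zero (p := p) (natDegree_p ▸ hv)
  rw [sum_eq_single 0 (fun c _ hc => ?_) (by simp)] at hsum
  · simp only [ZeroMemClass.coe_zero, zero_dotProduct, AddChar.map_zero_eq_one, mul_one,
      hWt_eq_zero.2 rfl, eval_p, prod_eq_zero_iff] at hsum
    obtain ⟨w, hw, h⟩ := hsum
    exact ne_of_mem_of_not_mem hw h0 (by simpa using h)
  · have hc' := hS c c.2 (by simpa using hc)
    rw [eval_p, prod_eq_zero hc' (sub_self _), zero_mul]

end CoveringRadius

section GleasonInvariants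

open Polynomial

lemma X_sub_one_pow_dvd_of_dvd_expand {R : Type*} [CommRing R] [IsDomain R] [CharZero R]
    {n m : ℕ} (hn : n ≠ 0) {f : R[X]} (h : (X - C 1) ^ m ∣ expand R n f) : (X - C 1) ^ m ∣ f := by
  rcases eq_or_ne f 0 with rfl | hf
  · exact dvd_zero _
  obtain ⟨g, hfg, hg⟩ := exists_eq_pow_rootMultiplicity_mul_and_not_dvd f hf 1
  rw [← le_rootMultiplicity_iff hf]
  set r := rootMultiplicity 1 f
  let cofactor : R[X] := (∑ i ∈ range n, X ^ i) ^ r * expand R n g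
  have hexpand : expand R n f = (X - C 1) ^ r * cofactor := by
    have hgeom : (X : R[X]) ^ n - 1 = (X - C 1) * ∑ i ∈ range n, X ^ i := by
      rw [C_1, mul_geom_sum]
    rw [hfg, map_mul, map_pow, map_sub, expand_X, expand_C, C_1, hgeom, mul_pow, mul_assoc, C_1]
  have hcofactor : ¬ X - C 1 ∣ cofactor := by
    rw [dvd_iff_isRoot] at hg ⊢
    simpa [cofactor, IsRoot.def, eval_geom_sum, expand_eval, hn] using hg
  by_contra! hrm
  refine hcofactor ((mul_dvd_mul_iff_left (pow_ne_zero r (X_sub_C_ne_zero (1 : R)))).1 ?_)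
  rw [← pow_succ, ← hexpand]
  exact (pow_dvd_pow _ hrm).trans h

/-- The binary forms `∑ j ≤ M, f.coeff j * a ^ (4 * (M - j)) * b ^ (4 * j)` that are invariant,
up to the factor `4 ^ M`, under the MacWilliams transform `(a, b) ↦ (a + b, a - b)`; they are
encoded by the dehomogenization `f`, that is, by putting `(a, b) = (1, x)`. -/
def gleasonInvariants (M : ℕ) : Submodule ℝ ℝ[X] where
  carrier := {f | f.natDegree ≤ M ∧ ∀ x : ℝ, x ≠ -1 →
    (1 + x) ^ (4 * M) * f.eval (((1 - x) / (1 + x)) ^ 4) = 4 ^ M * f.eval (x ^ 4)}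
  add_mem' := fun hf hg => ⟨natDegree_add_le_of_degree_le hf.1 hg.1, fun x hx => by
    rw [eval_add, eval_add, mul_add, mul_add, hf.2 x hx, hg.2 x hx]⟩
  zero_mem' := by simp
  smul_mem' := fun a f hf => ⟨(natDegree_smul_le a f).trans hf.1, fun x hx => by
    rw [eval_smul, eval_smul, mul_smul_comm, mul_smul_comm, hf.2 x hx]⟩

variable {M N : ℕ} {f g : ℝ[X]}

lemma mem_gleasonInvariants : f ∈ gleasonInvariants M ↔ f.natDegree ≤ M ∧ ∀ x : ℝ, x ≠ -1 →
    (1 + x) ^ (4 * M) * f.eval (((1 - x) / (1 + x)) ^ 4) = 4 ^ M * f.eval (x ^ 4) :=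
  Iff.rfl

lemma one_mem_gleasonInvariants : 1 ∈ gleasonInvariants 0 := by
  simp [mem_gleasonInvariants]

lemma mul_mem_gleasonInvariants (hf : f ∈ gleasonInvariants M) (hg : g ∈ gleasonInvariants N) :
    f * g ∈ gleasonInvariants (M + N) := by
  refine ⟨natDegree_mul_le_of_le hf.1 hg.1, fun x hx => ?_⟩
  rw [eval_mul, eval_mul, mul_add, pow_add, pow_add, mul_mul_mul_comm, hf.2 x hx, hg.2 x hx,
    mul_mul_mul_comm]

lemma pow_mem_gleasonInvariants (hf : f ∈ gleasonInvariants M) (n : ℕ) :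
    f ^ n ∈ gleasonInvariants (M * n) := by
  induction n with
  | zero => simpa using one_mem_gleasonInvariants
  | succ n ih => exact mul_mem_gleasonInvariants ih hf

/-- Substituting `x` and `-x`, where `(1 - x) / (1 + x) = u`, gives the same right-hand side. -/
lemma eval_pow_four_of_mem_gleasonInvariants (hf : f ∈ gleasonInvariants M) {u : ℝ} (hu : 0 < u) :
    f.eval (u ^ 4) = (u ^ 4) ^ M * f.eval ((u ^ 4)⁻¹) := by
  have hu1 : 1 + u ≠ 0 := by positivity
  obtain ⟨x, hadd, hsub⟩ : ∃ x, 1 + x = 2 / (1 + u) ∧ 1 - x = 2 * u / (1 + u) :=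
    ⟨(1 - u) / (1 + u), by field_simp; ring, by field_simp; ring⟩
  have hadd0 : 1 + x ≠ 0 := by rw [hadd]; positivity
  have hsub0 : 1 - x ≠ 0 := by rw [hsub]; positivity
  have hpos := hf.2 x fun h => hadd0 (by rw [h, add_neg_cancel])
  have hneg := hf.2 (-x) fun h => hsub0 (by rw [neg_inj.1 h, sub_self])
  have hratio : 1 - x = (1 + x) * u := by rw [hadd, hsub]; ring
  rw [hratio, mul_div_cancel_left₀ _ hadd0] at hpos
  rw [sub_neg_eq_add, ← sub_eq_add_neg, hratio, div_mul_cancel_left₀ hadd0, inv_pow,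
    Even.neg_pow (by decide), ← hpos, mul_pow, mul_assoc] at hneg
  rw [← pow_mul]
  exact (mul_left_cancel₀ (pow_ne_zero _ hadd0) hneg).symm

lemma reflect_eq_of_mem_gleasonInvariants (hf : f ∈ gleasonInvariants M) : reflect M f = f := by
  refine eq_of_infinite_eval_eq _ _ ((Set.Ioi_infinite (0 : ℝ)).mono fun y (hy : 0 < y) => ?_)
  obtain ⟨u, hu, rfl⟩ : ∃ u : ℝ, 0 < u ∧ u ^ 4 = y :=
    ⟨y ^ ((4 : ℕ) : ℝ)⁻¹, by positivity, Real.rpow_inv_natCast_pow hy.le four_ne_zero⟩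
  let _ : Invertible (u ^ 4)⁻¹ := invertibleOfNonzero (by positivity)
  have h := eval₂_reflect_mul_pow (RingHom.id ℝ) (u ^ 4)⁻¹ M f hf.1
  rw [invOf_eq_inv, inv_inv, inv_pow] at h
  rw [Set.mem_ofPred_eq, eval_pow_four_of_mem_gleasonInvariants hf hu]
  exact (mul_inv_eq_iff_eq_mul₀ (by positivity)).1 h |>.trans (mul_comm _ _)

lemma natDegree_le_of_X_pow_dvd {m : ℕ} (hf : f ∈ gleasonInvariants M) (hX : X ^ m ∣ f) :
    f.natDegree ≤ M - m := by
  refine natDegree_le_iff_coeff_eq_zero.2 fun i hi => ?_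
  rcases lt_or_ge M i with hMi | hiM
  · exact coeff_eq_zero_of_natDegree_lt (hf.1.trans_lt hMi)
  · rw [← reflect_eq_of_mem_gleasonInvariants hf, coeff_reflect, revAt_le hiM]
    exact X_pow_dvd_iff.1 hX _ (by omega)

lemma sum_coeff_mul_eq_expand_of_mem_gleasonInvariants (hf : f ∈ gleasonInvariants M) :
    ∑ j ∈ range (M + 1), C (f.coeff j) * ((X - C 1) ^ (4 * j) * (X + C 1) ^ (4 * (M - j))) =
      C (4 ^ M) * expand ℝ 4 f := by
  refine eq_of_infinite_eval_eq _ _ ((Set.finite_singleton (-1 : ℝ)).infinite_compl.mono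
    fun x hx => ?_)
  have hx0 : 1 + x ≠ 0 := fun h => hx (eq_neg_of_add_eq_zero_right h)
  have term (j : ℕ) (hj : j ∈ range (M + 1)) :
      (x - 1) ^ (4 * j) * (x + 1) ^ (4 * (M - j)) =
        (1 + x) ^ (4 * M) * (((1 - x) / (1 + x)) ^ 4) ^ j := by
    rw [show 4 * M = 4 * (M - j) + 4 * j by grind, ← pow_mul, pow_add, div_pow, mul_assoc,
      mul_div_cancel₀ _ (pow_ne_zero _ hx0), mul_comm, add_comm, ← neg_sub,
      (Even.neg_pow (⟨2 * j, by omega⟩ : Even (4 * j)))]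
  simp only [Set.mem_ofPred_eq, eval_finsetSum, eval_mul, eval_pow, eval_sub, eval_add, eval_X,
    eval_C, expand_eval]
  rw [← hf.2 x hx, eval_eq_sum_range' (Nat.lt_succ_of_le hf.1), mul_sum]
  refine sum_congr rfl fun j hj => ?_
  rw [term j hj, mul_left_comm]

lemma X_sub_one_pow_dvd_of_mem_gleasonInvariants {m : ℕ} (hf : f ∈ gleasonInvariants M)
    (hX : X ^ m ∣ f) : (X - C 1) ^ (4 * m) ∣ f := by
  refine X_sub_one_pow_dvd_of_dvd_expand four_ne_zero
    ((IsUnit.dvd_mul_left (isUnit_C.2 (by simp : IsUnit ((4 : ℝ) ^ M)))).1 ?_)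
  rw [← sum_coeff_mul_eq_expand_of_mem_gleasonInvariants hf]
  refine dvd_sum fun j _ => ?_
  rcases lt_or_ge j m with hj | hj
  · simp [X_pow_dvd_iff.1 hX j hj]
  · exact ((pow_dvd_pow _ (by omega)).mul_right _).mul_left _

end GleasonInvariants

section GleasonGenerators

open Polynomial

/-- The weight enumerator of the extended Hamming code of length 8, with `X = x ^ 4`. -/
noncomputable def hammingPoly : ℝ[X] := 1 + 14 * X + X ^ 2

/-- Gleason's second generator `x ^ 4 * (1 - x ^ 4) ^ 4`, in length 24, with `X = x ^ 4`. -/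
noncomputable def gleasonDelta : ℝ[X] := X * (1 - X) ^ 4

lemma hammingPoly_mem_gleasonInvariants : hammingPoly ∈ gleasonInvariants 2 := by
  refine ⟨by unfold hammingPoly; compute_degree, fun x hx => ?_⟩
  have hx0 : 1 + x ≠ 0 := fun h => hx (eq_neg_of_add_eq_zero_right h)
  simp only [hammingPoly, eval_add, eval_mul, eval_pow, eval_one, eval_ofNat, eval_X]
  field_simp
  ring

lemma gleasonDelta_mem_gleasonInvariants : gleasonDelta ∈ gleasonInvariants 6 := by
  refine ⟨by unfold gleasonDelta; compute_degree!, fun x hx => ?_⟩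
  have hx0 : 1 + x ≠ 0 := fun h => hx (eq_neg_of_add_eq_zero_right h)
  simp only [gleasonDelta, eval_sub, eval_mul, eval_pow, eval_one, eval_X]
  field_simp
  ring

lemma hammingPoly_pow_mul_gleasonDelta_pow_mem (a j : ℕ) :
    hammingPoly ^ a * gleasonDelta ^ j ∈ gleasonInvariants (2 * a + 6 * j) :=
  mul_mem_gleasonInvariants (pow_mem_gleasonInvariants hammingPoly_mem_gleasonInvariants a)
    (pow_mem_gleasonInvariants gleasonDelta_mem_gleasonInvariants j)

lemma eq_zero_of_mem_gleasonInvariants_of_X_pow_dvd {k : ℕ} {f : ℝ[X]}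
    (hf : f ∈ gleasonInvariants (6 * k + 2)) (hX : X ^ (k + 1) ∣ f) : f = 0 := by
  have hcoprime : IsCoprime ((X - C 1) ^ (4 * (k + 1))) (X ^ (k + 1) : ℝ[X]) := by
    have h : IsCoprime (X - C 1 : ℝ[X]) (X - C 0) :=
      isCoprime_X_sub_C_of_isUnit_sub (by simp)
    exact IsCoprime.pow (by rwa [C_0, sub_zero] at h)
  have hdvd := hcoprime.mul_dvd (X_sub_one_pow_dvd_of_mem_gleasonInvariants hf hX) hX
  refine eq_zero_of_dvd_of_natDegree_lt hdvd ?_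
  have hdeg := natDegree_le_of_X_pow_dvd hf hX
  rw [natDegree_mul (pow_ne_zero _ (X_sub_C_ne_zero 1)) (pow_ne_zero _ X_ne_zero),
    natDegree_pow, natDegree_pow, natDegree_X_sub_C, natDegree_X]
  omega

/-- Gleason's theorem in lengths `24 * k + 8`. -/
theorem gleasonInvariants_le_span (k : ℕ) : gleasonInvariants (6 * k + 2) ≤
    Submodule.span ℝ {f | ∃ m j, m + j = k ∧ f = hammingPoly ^ (3 * m + 1) * gleasonDelta ^ j} := by
  set B := {f | ∃ m j, m + j = k ∧ f = hammingPoly ^ (3 * m + 1) * gleasonDelta ^ j}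
  have hB : Submodule.span ℝ B ≤ gleasonInvariants (6 * k + 2) := by
    rw [Submodule.span_le]
    rintro _ ⟨m, j, rfl, rfl⟩
    have h := hammingPoly_pow_mul_gleasonDelta_pow_mem (3 * m + 1) j
    rwa [show 2 * (3 * m + 1) + 6 * j = 6 * (m + j) + 2 by ring] at h
  intro f hf
  have approx (t : ℕ) (ht : t ≤ k + 1) : ∃ g ∈ Submodule.span ℝ B, X ^ t ∣ f - g := by
    induction t with
    | zero => exact ⟨0, zero_mem _, by simp⟩
    | succ t ih =>
      obtain ⟨g, hg, h, hh⟩ := ih (by omega)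
      obtain ⟨m, rfl⟩ := Nat.exists_eq_add_of_le' (Nat.le_of_lt_succ ht)
      let b : ℝ[X] := hammingPoly ^ (3 * m + 1) * gleasonDelta ^ t
      refine ⟨g + h.coeff 0 • b,
        add_mem hg (Submodule.smul_mem _ _ (Submodule.subset_span ⟨m, t, rfl, rfl⟩)), ?_⟩
      have hb : b = X ^ t * (hammingPoly ^ (3 * m + 1) * (1 - X) ^ (4 * t)) := by
        simp only [b, gleasonDelta, mul_pow, ← pow_mul]
        ring
      rw [← sub_sub, hh, hb, smul_eq_C_mul, mul_left_comm, ← mul_sub, pow_succ]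
      refine mul_dvd_mul_left _ (X_dvd_iff.2 ?_)
      simp [coeff_zero_eq_eval_zero, hammingPoly]
  obtain ⟨g, hg, hX⟩ := approx (k + 1) le_rfl
  rwa [sub_eq_zero.1 (eq_zero_of_mem_gleasonInvariants_of_X_pow_dvd (sub_mem hf (hB hg)) hX)]

end GleasonGenerators

section LagrangeFunctional

open PowerSeries

/-- Lagrange inversion in disguise: `(m + 1) * H ^ m * H'` is the derivative of `H ^ (m + 1)`. -/
lemma coeff_pow_mul_sub_X_mul_derivative {R : Type*} [CommRing R] [IsDomain R] [CharZero R]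
    (H : R⟦X⟧) (m : ℕ) : coeff (m + 1) (H ^ m * (H - X * d⁄dX R H)) = 0 := by
  have hderiv : d⁄dX R (H ^ (m + 1)) = (m + 1 : R⟦X⟧) * H ^ m * d⁄dX R H := by
    simp [Derivation.leibniz_pow, mul_assoc]
  have h : (C (m + 1 : R)) * (H ^ m * (H - X * d⁄dX R H)) =
      C (m + 1 : R) * H ^ (m + 1) - X * d⁄dX R (H ^ (m + 1)) := by
    rw [hderiv, map_add, map_natCast, map_one]
    ring
  have hcoeff := congrArg (coeff (m + 1)) h
  rw [coeff_C_mul, map_sub, coeff_C_mul, coeff_succ_X_mul, coeff_derivative, mul_comm (coeff _ _),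
    sub_self] at hcoeff
  exact (mul_eq_zero_iff_left (Nat.cast_add_one_ne_zero m)).1 hcoeff

/-- The power series `1 / (1 - X)`. -/
noncomputable def geomSeries : ℝ⟦X⟧ := PowerSeries.mk 1

lemma geomSeries_mul_one_sub_X : geomSeries * (1 - X) = 1 :=
  mk_one_mul_one_sub_eq_one ℝ

lemma derivative_geomSeries : d⁄dX ℝ geomSeries = geomSeries ^ 2 := by
  have h := congrArg (d⁄dX ℝ) geomSeries_mul_one_sub_X
  simp only [Derivation.leibniz, map_sub, Derivation.map_one_eq_zero, derivative_X, smul_eq_mul]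
    at h
  linear_combination geomSeries * h - d⁄dX ℝ geomSeries * geomSeries_mul_one_sub_X

lemma coeff_geomSeries_pow_succ (d i : ℕ) :
    coeff i (geomSeries ^ (d + 1)) = ((d + i).choose d : ℝ) := by
  rw [geomSeries, mk_one_pow_eq_mk_choose_add, coeff_mk]

/-- The polynomial `P` for which `H = hammingPoly ^ 3 / (1 - X) ^ 4` satisfies
`H - X * H' = hammingPoly ^ 2 * P / (1 - X) ^ 5`. -/
noncomputable def lagrangeFactor : ℝ⟦X⟧ := 1 - 33 * X - 33 * X ^ 2 + X ^ 3

lemma coe_hammingPoly : (hammingPoly : ℝ⟦X⟧) = 1 + 14 * X + X ^ 2 := by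
  have h : ((14 : Polynomial ℝ) : ℝ⟦X⟧) = 14 := map_ofNat Polynomial.coeToPowerSeries.ringHom 14
  simp [hammingPoly, h]

lemma coe_hammingPoly_mul_lagrangeFactor : (hammingPoly : ℝ⟦X⟧) * lagrangeFactor =
    1 - 19 * X - 494 * X ^ 2 - 494 * X ^ 3 - 19 * X ^ 4 + X ^ 5 := by
  rw [coe_hammingPoly, lagrangeFactor]
  ring

lemma sub_X_mul_derivative_hammingPoly_pow_mul_geomSeries_pow :
    ((hammingPoly : ℝ⟦X⟧) ^ 3 * geomSeries ^ 4) -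
        X * d⁄dX ℝ ((hammingPoly : ℝ⟦X⟧) ^ 3 * geomSeries ^ 4) =
      (hammingPoly : ℝ⟦X⟧) ^ 2 * lagrangeFactor * geomSeries ^ 5 := by
  have hE : d⁄dX ℝ (1 + 14 * X + X ^ 2 : ℝ⟦X⟧) = 14 + 2 * X := by
    have h : d⁄dX ℝ (14 : ℝ⟦X⟧) = 0 := Derivation.map_natCast _ 14
    simp [Derivation.leibniz, Derivation.leibniz_pow, h]
  rw [coe_hammingPoly, lagrangeFactor]
  simp only [Derivation.leibniz, Derivation.leibniz_pow, hE, derivative_geomSeries, smul_eq_mul,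
    nsmul_eq_mul]
  push_cast
  linear_combination (-(1 + 14 * X + X ^ 2) ^ 2 * geomSeries ^ 4 *
    (1 + 14 * X + X ^ 2 - 3 * X * (14 + 2 * X))) * geomSeries_mul_one_sub_X

/-- The power series with which `lagrangeFunctional` multiplies its argument. -/
noncomputable def lagrangeWeight (k : ℕ) : ℝ⟦X⟧ :=
  hammingPoly * lagrangeFactor * geomSeries ^ (4 * k + 5)

/-- A linear functional that vanishes on the weight enumerators of length `24 * k + 8` and depends
only on their coefficients up to degree `k + 1`. -/
noncomputable def lagrangeFunctional (k : ℕ) : Polynomial ℝ →ₗ[ℝ] ℝ :=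
  coeff (k + 1) ∘ₗ LinearMap.mulRight ℝ (lagrangeWeight k) ∘ₗ
    (Polynomial.coeToPowerSeries.algHom ℝ).toLinearMap

lemma lagrangeFunctional_apply (k : ℕ) (f : Polynomial ℝ) :
    lagrangeFunctional k f = coeff (k + 1) ((f : ℝ⟦X⟧) * lagrangeWeight k) := by
  simp [lagrangeFunctional, Polynomial.coeToPowerSeries.algHom_apply]

lemma lagrangeFunctional_hammingPoly_pow_mul_gleasonDelta_pow (m j : ℕ) :
    lagrangeFunctional (m + j) (hammingPoly ^ (3 * m + 1) * gleasonDelta ^ j) = 0 := by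
  have hcancel : (1 - X) ^ (4 * j) * geomSeries ^ (4 * j) = (1 : ℝ⟦X⟧) := by
    rw [← mul_pow, mul_comm, geomSeries_mul_one_sub_X, one_pow]
  have hcoe : ((hammingPoly ^ (3 * m + 1) * gleasonDelta ^ j : Polynomial ℝ) : ℝ⟦X⟧) =
      (hammingPoly : ℝ⟦X⟧) ^ (3 * m + 1) * (X ^ j * (1 - X) ^ (4 * j)) := by
    simp [gleasonDelta, mul_pow, ← pow_mul]
  have h := coeff_pow_mul_sub_X_mul_derivative ((hammingPoly : ℝ⟦X⟧) ^ 3 * geomSeries ^ 4) m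
  rw [← coeff_X_pow_mul _ j (m + 1), sub_X_mul_derivative_hammingPoly_pow_mul_geomSeries_pow] at h
  rw [lagrangeFunctional_apply, hcoe, lagrangeWeight, add_right_comm, ← h]
  congr 1
  linear_combination ((hammingPoly : ℝ⟦X⟧) ^ (3 * m + 2) * lagrangeFactor * X ^ j *
    geomSeries ^ (4 * m + 5)) * hcancel

lemma lagrangeFunctional_eq_zero_of_mem_gleasonInvariants {k : ℕ} {f : Polynomial ℝ}
    (hf : f ∈ gleasonInvariants (6 * k + 2)) : lagrangeFunctional k f = 0 := by
  refine (Submodule.span_le (p := (lagrangeFunctional k).ker)).2 ?_ (gleasonInvariants_le_span k hf)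
  rintro _ ⟨m, j, rfl, rfl⟩
  exact lagrangeFunctional_hammingPoly_pow_mul_gleasonDelta_pow m j

lemma choose_add_succ_eq_five_mul (k : ℕ) :
    (4 * k + 4 + (k + 1)).choose (4 * k + 4) = 5 * (4 * k + 4 + k).choose (4 * k + 4) := by
  have h := Nat.add_one_mul_choose_eq (4 * k + 4 + k) k
  rw [Nat.choose_symm_add, Nat.choose_symm_add]
  refine Nat.eq_of_mul_eq_mul_right k.add_one_pos (h.symm.trans ?_)
  ring

lemma lagrangeFunctional_one (k : ℕ) : lagrangeFunctional k 1 =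
    coeff (k + 1) (geomSeries ^ (4 * k + 5)) -
      19 * coeff (k + 1) (X ^ 1 * geomSeries ^ (4 * k + 5)) -
      494 * coeff (k + 1) (X ^ 2 * geomSeries ^ (4 * k + 5)) -
      494 * coeff (k + 1) (X ^ 3 * geomSeries ^ (4 * k + 5)) -
      19 * coeff (k + 1) (X ^ 4 * geomSeries ^ (4 * k + 5)) +
      coeff (k + 1) (X ^ 5 * geomSeries ^ (4 * k + 5)) := by
  simp only [← coeff_C_mul, ← map_add, ← map_sub]
  rw [lagrangeFunctional_apply, lagrangeWeight, coe_hammingPoly_mul_lagrangeFactor,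
    Polynomial.coe_one, one_mul, map_ofNat, map_ofNat]
  congr 1
  ring

lemma lagrangeFunctional_one_neg (k : ℕ) : lagrangeFunctional k 1 < 0 := by
  let c (i : ℕ) : ℝ := coeff i (geomSeries ^ (4 * k + 5))
  have hc (i : ℕ) : c i = (4 * k + 4 + i).choose (4 * k + 4) := coeff_geomSeries_pow_succ _ i
  have hpos (i : ℕ) : 0 < c i := by
    rw [hc]
    exact_mod_cast Nat.choose_pos (by omega)
  have hmono : Monotone c := fun i j hij => by
    rw [hc, hc]
    exact_mod_cast Nat.choose_le_choose _ (by omega)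
  have hstep : c (k + 1) = 5 * c k := by
    rw [hc, hc]
    exact_mod_cast choose_add_succ_eq_five_mul k
  have hcoeff (j : ℕ) : coeff (k + 1) (X ^ j * geomSeries ^ (4 * k + 5)) =
      if j ≤ k + 1 then c (k + 1 - j) else 0 :=
    coeff_X_pow_mul' _ _ _
  have hnonneg (j : ℕ) : 0 ≤ if j ≤ k + 1 then c (k + 1 - j) else 0 := by
    split_ifs
    exacts [(hpos _).le, le_rfl]
  have hle : (if 5 ≤ k + 1 then c (k + 1 - 5) else 0) ≤ c k := by
    split_ifs
    exacts [hmono (by omega), (hpos _).le]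
  have hL := lagrangeFunctional_one k
  simp only [hcoeff] at hL
  change _ = c (k + 1) - _ - _ - _ - _ + _ at hL
  rw [hstep, if_pos (by omega), Nat.add_sub_cancel] at hL
  linarith [hnonneg 2, hnonneg 3, hnonneg 4, hpos k]

lemma lagrangeFunctional_X_pow_mul (k : ℕ) (f : Polynomial ℝ) :
    lagrangeFunctional k (Polynomial.X ^ (k + 2) * f) = 0 := by
  rw [lagrangeFunctional_apply, Polynomial.coe_mul, Polynomial.coe_pow, Polynomial.coe_X, mul_assoc]
  exact X_pow_dvd_iff.1 (dvd_mul_right _ _) _ (by omega)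

end LagrangeFunctional

section ExtremalCodes

variable {ι : Type*} [Fintype ι] {D : Submodule (ZMod 2) (ι → ZMod 2)}

open scoped Classical in
open Polynomial in
/-- The weight enumerator of a doubly even code, with `X = x ^ 4`. -/
noncomputable def weightPoly (D : Submodule (ZMod 2) (ι → ZMod 2)) : ℝ[X] :=
  ∑ c : D, X ^ (hWt (c : ι → ZMod 2) / 4)

open scoped Classical in
lemma card_eq_four_pow_of_dualCode_eq (hself : dualCode D = D) {M : ℕ}
    (hM : Fintype.card ι = 4 * M) : Fintype.card D = 4 ^ M := by
  have h := card_mul_card_dualCode D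
  rw [hself, hM, pow_mul, show 2 ^ 4 = 4 * 4 from rfl, mul_pow] at h
  exact Nat.mul_self_inj.1 h

open Polynomial in
lemma DoublyEven.weightPoly_mem_gleasonInvariants (hD : DoublyEven (D : Set (ι → ZMod 2)))
    (hself : dualCode D = D) {M : ℕ} (hM : Fintype.card ι = 4 * M) :
    weightPoly D ∈ gleasonInvariants M := by
  classical
  have hle (c : D) : hWt (c : ι → ZMod 2) ≤ 4 * M := hM ▸ hWt_le_card _
  have hdiv (c : D) : 4 * (hWt (c : ι → ZMod 2) / 4) = hWt (c : ι → ZMod 2) :=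
    Nat.mul_div_cancel' (hD c c.2)
  refine ⟨natDegree_sum_le_of_forall_le _ _ fun c _ => ?_, fun x hx => ?_⟩
  · rw [natDegree_X_pow]
    exact Nat.div_le_of_le_mul (hle c)
  have hx0 : 1 + x ≠ 0 := fun h => hx (eq_neg_of_add_eq_zero_right h)
  have term (c : D) : (1 + x) ^ (4 * M) * ((1 - x) / (1 + x)) ^ hWt (c : ι → ZMod 2) =
      (1 + x) ^ (4 * M - hWt (c : ι → ZMod 2)) * (1 - x) ^ hWt (c : ι → ZMod 2) := by
    rw [div_pow, pow_sub₀ _ hx0 (hle c)]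
    ring
  have h := macWilliams_identity D 1 x
  rw [hself, hM, card_eq_four_pow_of_dualCode_eq hself hM] at h
  simpa [weightPoly, eval_finsetSum, mul_sum, ← pow_mul, hdiv, term] using h

open Polynomial in
lemma X_pow_dvd_weightPoly_sub_one {t : ℕ} (hD : ∀ c ∈ D, c ≠ 0 → 4 * t ≤ hWt c) :
    X ^ t ∣ weightPoly D - 1 := by
  classical
  have h0 : (X : ℝ[X]) ^ (hWt ((0 : D) : ι → ZMod 2) / 4) = 1 := by simp [hWt_eq_zero.2]
  rw [weightPoly, ← add_sum_erase _ _ (mem_univ (0 : D)), h0, add_sub_cancel_left]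
  refine dvd_sum fun c hc => pow_dvd_pow _ ((Nat.le_div_iff_mul_le four_pos).2 ?_)
  rw [mul_comm]
  exact hD c c.2 (by simpa using ne_of_mem_erase hc)

/-- The Mallows–Sloane bound in lengths `24 * k + 8`. -/
theorem DoublyEven.exists_ne_zero_hWt_le (hD : DoublyEven (D : Set (ι → ZMod 2)))
    (hself : dualCode D = D) {k : ℕ} (hι : Fintype.card ι = 24 * k + 8) :
    ∃ c ∈ D, c ≠ 0 ∧ hWt c ≤ 4 * k + 4 := by
  by_contra! hmin
  have hmin' (c) (hc : c ∈ D) (hc0 : c ≠ 0) : 4 * (k + 2) ≤ hWt c := by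
    have := hmin c hc hc0
    have := hD c hc
    omega
  obtain ⟨q, hq⟩ := X_pow_dvd_weightPoly_sub_one hmin'
  have hzero := lagrangeFunctional_eq_zero_of_mem_gleasonInvariants
    (hD.weightPoly_mem_gleasonInvariants hself (M := 6 * k + 2) (by omega))
  rw [eq_add_of_sub_eq' hq, map_add, lagrangeFunctional_X_pow_mul, add_zero] at hzero
  exact (lagrangeFunctional_one_neg k).ne hzero

lemma DoublyEven.hWt_mem_of_le_hWt (hD : DoublyEven (D : Set (ι → ZMod 2))) (h1 : 1 ∈ D) {k : ℕ}
    (hι : Fintype.card ι = 24 * k + 8) (hmin : ∀ c ∈ D, c ≠ 0 → 4 * k + 3 ≤ hWt c)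
    {c : ι → ZMod 2} (hc : c ∈ D) (hc0 : c ≠ 0) :
    hWt c ∈ insert (24 * k + 8) ((Icc (k + 1) (5 * k + 1)).image (4 * ·)) := by
  rw [mem_insert, mem_image]
  by_cases h : 1 + c = 0
  · left
    have := hWt_le_card c
    have hcompl := hWt_one_add c
    rw [h, hWt_eq_zero.2 rfl] at hcompl
    omega
  · right
    have := hmin c hc hc0
    have := hmin (1 + c) (add_mem h1 hc) h
    have := hWt_one_add c
    obtain ⟨j, hj⟩ := hD c hc
    exact ⟨j, mem_Icc.2 (by omega), hj.symm⟩

/-- A self-dual doubly even code `E ≥ D` has at most `4 * k + 2` nonzero weights, hence covering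
radius at most `4 * k + 2`, so it cannot be properly contained in `dualCode D`. -/
theorem DoublyEven.dualCode_eq_of_le_hWt (hD : DoublyEven (D : Set (ι → ZMod 2))) {k : ℕ}
    (hι : Fintype.card ι = 24 * k + 8) (hmin : ∀ v ∈ dualCode D, v ≠ 0 → 4 * k + 3 ≤ hWt v) :
    dualCode D = D := by
  obtain ⟨E, hDE, hE, hself⟩ := exists_selfDual_ge_of_doublyEven (by omega) hD
  have hED : E ≤ dualCode D := hself ▸ LinearMap.BilinForm.orthogonal_le hDE
  let S : Finset ℕ := insert (24 * k + 8) ((Icc (k + 1) (5 * k + 1)).image (4 * ·))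
  have hS : #S ≤ 4 * k + 2 := calc
    #S ≤ #(Icc (k + 1) (5 * k + 1)) + 1 := (card_insert_le _ _).trans (by grw [card_image_le])
    _ = 4 * k + 2 := by rw [Nat.card_Icc]; omega
  have hweights (c) (hc : c ∈ E) (hc0 : c ≠ 0) : hWt c ∈ S :=
    hE.hWt_mem_of_le_hWt (hself ▸ hE.one_mem_dualCode) hι (fun c hc => hmin c (hED hc)) hc hc0
  have hDdual : dualCode D = E := by
    refine le_antisymm (fun v hv => ?_) hED
    obtain ⟨d, hd, hle⟩ := exists_mem_dualCode_hWt_add_le_card (by simp [S]) hweights v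
    rw [hself] at hd
    have hvd : v + d = 0 := by
      by_contra h
      have := hmin _ (add_mem hv (hED hd)) h
      omega
    rwa [eq_neg_of_add_eq_zero_left hvd, ZModModule.neg_eq_self]
  rw [← dualCode_dualCode D, hDdual, hself, hself]

lemma DoublyEven.minHam_eq (hD : DoublyEven (D : Set (ι → ZMod 2))) (hself : dualCode D = D) {k : ℕ}
    (hι : Fintype.card ι = 24 * k + 8) (hmin : ∀ v ∈ D, v ≠ 0 → 4 * k + 3 ≤ hWt v) :
    minHam (D : Set (ι → ZMod 2)) = 4 * k + 4 := by
  obtain ⟨c, hc, hc0, hle⟩ := hD.exists_ne_zero_hWt_le hself hι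
  have hmem : hWt c ∈ {d | ∃ v ∈ (D : Set (ι → ZMod 2)), v ≠ 0 ∧ hWt v = d} := ⟨c, hc, hc0, rfl⟩
  refine le_antisymm ((Nat.sInf_le hmem).trans hle) (le_csInf ⟨_, hmem⟩ ?_)
  rintro _ ⟨v, hv, hv0, rfl⟩
  have := hmin v hv hv0
  have := hD v hv
  omega

end ExtremalCodes

section ResidueCode

variable {ι : Type*} (C : Submodule (ZMod 4) (ι → ZMod 4))

/-- The residue code of a `ZMod 4`-code: `residue` bundled as a submodule. -/
def residueCode : Submodule (ZMod 2) (ι → ZMod 2) :=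
  AddSubgroup.toZModSubmodule 2 (C.toAddSubgroup.map
    ((ZMod.castHom (by norm_num : 2 ∣ 4) (ZMod 2)).toAddMonoidHom.compLeft ι))

lemma coe_residueCode : (residueCode C : Set (ι → ZMod 2)) = residue C := rfl

variable [Fintype ι]

lemma dotProduct_self_eq_natCast_hWt_res2 (x : ι → ZMod 4) :
    x ⬝ᵥ x = (hWt (res2 x) : ZMod 4) := by
  have h : ∀ a : ZMod 4,
      a * a = ((ZMod.castHom (by norm_num : 2 ∣ 4) (ZMod 2) a).val : ZMod 4) := by
    decide
  simp [hWt_eq_sum_val, res2, dotProduct, h]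

/-- The embedding `a ↦ 2 * a` of `ZMod 2` as the ideal `(2)` of `ZMod 4`. -/
def doubling : ZMod 2 →+ ZMod 4 where
  toFun a := 2 * a.val
  map_zero' := by decide
  map_add' := by decide

lemma doubling_mul : ∀ (a : ZMod 2) (b : ZMod 4),
    doubling a * b = doubling (a * ZMod.castHom (by norm_num : 2 ∣ 4) (ZMod 2) b) := by
  decide

lemma doubling_injective : Function.Injective doubling := by
  decide

lemma leeWt_doubling_comp (v : ι → ZMod 2) : leeWt (doubling ∘ v) = 2 * hWt v := by
  have h : ∀ a : ZMod 2, leeVal (doubling a) = 2 * a.val := by decide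
  simp [leeWt, hWt_eq_sum_val, mul_sum, h]

variable {C}

lemma SelfDualZ4.doublyEven_residueCode (hC : SelfDualZ4 C) :
    DoublyEven (residueCode C : Set (ι → ZMod 2)) := by
  rintro _ ⟨c, hc, rfl⟩
  have h : c ⬝ᵥ c = 0 := (hC ▸ hc : c ∈ dualZ4 (C : Set (ι → ZMod 4))) c hc
  rwa [dotProduct_self_eq_natCast_hWt_res2, ZMod.natCast_eq_zero_iff] at h

lemma SelfDualZ4.doubling_comp_mem (hC : SelfDualZ4 C) {v : ι → ZMod 2}
    (hv : v ∈ dualCode (residueCode C)) : doubling ∘ v ∈ C := by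
  rw [← SetLike.mem_coe, hC]
  intro y hy
  rw [← SetLike.mem_coe, coe_dualCode] at hv
  simp only [Function.comp_apply, doubling_mul, ← map_sum]
  exact (map_eq_zero_iff doubling doubling_injective).2 (hv _ ⟨y, hy, rfl⟩)

lemma SelfDualZ4.minLee_le_two_mul_hWt (hC : SelfDualZ4 C) {v : ι → ZMod 2}
    (hv : v ∈ dualCode (residueCode C)) (hv0 : v ≠ 0) :
    minLee (C : Set (ι → ZMod 4)) ≤ 2 * hWt v := by
  refine Nat.sInf_le ⟨doubling ∘ v, hC.doubling_comp_mem hv, fun h => hv0 ?_, leeWt_doubling_comp v⟩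
  exact doubling_injective.comp_left (h.trans (funext fun _ => (map_zero doubling).symm))

end ResidueCode

end Z4Note

open Z4Note in
theorem residue_of_selfdual_Z4_length24k8_general {ι : Type*} [Fintype ι] {k : ℕ}
    (hι : Fintype.card ι = 24 * k + 8) (C : Submodule (ZMod 4) (ι → ZMod 4)) (hsd : SelfDualZ4 C)
    (hlee : 8 * k + 6 ≤ minLee (C : Set (ι → ZMod 4))) :
    residue (C : Set (ι → ZMod 4)) = dual2 (residue (C : Set (ι → ZMod 4))) ∧
    DoublyEven (residue (C : Set (ι → ZMod 4))) ∧
    minHam (residue (C : Set (ι → ZMod 4))) = 4 * k + 4 := by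
  have hmin (v) (hv : v ∈ dualCode (residueCode C)) (hv0 : v ≠ 0) : 4 * k + 3 ≤ hWt v := by
    have := hsd.minLee_le_two_mul_hWt hv hv0
    omega
  have heven := hsd.doublyEven_residueCode
  have hself := heven.dualCode_eq_of_le_hWt hι hmin
  rw [← coe_residueCode]
  exact ⟨selfDual2_iff_dualCode_eq.2 hself, heven, heven.minHam_eq hself hι (hself ▸ hmin)⟩

open Z4Note in
/-- the residue code of a self-dual `ZMod 4`-code of length `24k+8` and
minimum Lee weight `8k+8` or `8k+6` is a binary extremal doubly even self-dual code. -/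
theorem residue_of_selfdual_Z4_length24k8
    (k : ℕ) (hk : 0 < k)
    (C : Submodule (ZMod 4) (Fin (24 * k + 8) → ZMod 4))
    (hsd : SelfDualZ4 C)
    (hlee : minLee (C : Set (Fin (24 * k + 8) → ZMod 4)) = 8 * k + 8 ∨
            minLee (C : Set (Fin (24 * k + 8) → ZMod 4)) = 8 * k + 6) :
    residue (C : Set (Fin (24 * k + 8) → ZMod 4)) =
        dual2 (residue (C : Set (Fin (24 * k + 8) → ZMod 4))) ∧
    DoublyEven (residue (C : Set (Fin (24 * k + 8) → ZMod 4))) ∧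
    minHam (residue (C : Set (Fin (24 * k + 8) → ZMod 4))) = 4 * k + 4 := by
  exact residue_of_selfdual_Z4_length24k8_general (by simp) C hsd (by omega)
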